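/- arXiv:0812.2126 — 3 statements merged into one kernel-verified Lean document; each statement's English description precedes it below -/
import Mathlib

section
/- Let Γ be a torsion-free affine connection on U and let ω be a nonvanishing smooth 1-form on U with ω ∧ dω = 0. Then the codimension-one foliation defined by ω is totally geodesic for Γ if and only if there exists a smooth 1-form θ on U such that d^s_Γ ω = θ·ω. -/
/-!
Along a geodesic, `γ̈ = -Γ(γ̇, γ̇)` gives `d/dt ω(γ̇) = (d^s_Γ ω)(γ̇, γ̇)`. If `d^s_Γ ω = θ·ω`, then
`f = ω(γ̇)` solves the linear equation `f' = θ(γ̇) f`, so it vanishes identically once it vanishes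
at time `0`. Conversely, geodesics exist through every vector of `ker ω`, so on a totally geodesic
foliation the quadratic form of `d^s_Γ ω` vanishes on `ker ω`. Polarizing with `N = ω / |ω|²`, for
which `ω(N) = 1`, yields `d^s_Γ ω = θ·ω` with `θ = 2 (d^s_Γ ω)(N, ·) - (d^s_Γ ω)(N, N) ω`.
-/

open scoped BigOperators

/-- Partial derivative in the `i`-th coordinate direction. -/
noncomputable def pd {n : ℕ} (i : Fin n) (f : (Fin n → ℝ) → ℝ) (x : Fin n → ℝ) : ℝ :=
  fderiv ℝ f x (Pi.single i 1)

/-- A torsion-free affine connection on `U`, given by its Christoffel symbols `Γ k i j`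
(smooth on `U` and symmetric in the lower indices `i j`). -/
def IsTorsionFreeConn {n : ℕ} (U : Set (Fin n → ℝ))
    (Γ : Fin n → Fin n → Fin n → (Fin n → ℝ) → ℝ) : Prop :=
  (∀ k i j, ContDiffOn ℝ (⊤ : ℕ∞) (Γ k i j) U) ∧ (∀ k i j x, Γ k i j x = Γ k j i x)

/-- `γ` is a geodesic of `Γ` on the set `I ⊆ ℝ`, with image in `U`. -/
def IsGeodesicOn {n : ℕ} (U : Set (Fin n → ℝ))
    (Γ : Fin n → Fin n → Fin n → (Fin n → ℝ) → ℝ)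
    (I : Set ℝ) (γ : ℝ → Fin n → ℝ) : Prop :=
  (∀ t ∈ I, γ t ∈ U) ∧ ContDiffOn ℝ 2 γ I ∧
    ∀ t ∈ I, ∀ k, deriv (fun s => deriv (fun u => γ u k) s) t +
      ∑ i, ∑ j, Γ k i j (γ t) * deriv (fun u => γ u i) t * deriv (fun u => γ u j) t = 0

/-- The codimension-one foliation defined by the `1`-form `ω` is totally geodesic for `Γ`:
every geodesic tangent to a leaf at time `0` stays tangent to the kernel of `ω`. -/
def TotallyGeodesic {n : ℕ} (U : Set (Fin n → ℝ))
    (Γ : Fin n → Fin n → Fin n → (Fin n → ℝ) → ℝ)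
    (ω : (Fin n → ℝ) → Fin n → ℝ) : Prop :=
  ∀ I : Set ℝ, IsOpen I → I.OrdConnected → (0 : ℝ) ∈ I →
    ∀ γ : ℝ → Fin n → ℝ, IsGeodesicOn U Γ I γ →
      (∑ k, ω (γ 0) k * deriv (fun u => γ u k) 0) = 0 →
      ∀ t ∈ I, (∑ k, ω (γ t) k * deriv (fun u => γ u k) t) = 0

/-- `ω` is a smooth nonvanishing `1`-form on `U` satisfying the integrability
condition `ω ∧ dω = 0`. -/
def IsFoliationForm {n : ℕ} (U : Set (Fin n → ℝ)) (ω : (Fin n → ℝ) → Fin n → ℝ) : Prop :=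
  ContDiffOn ℝ (⊤ : ℕ∞) ω U ∧ (∀ x ∈ U, ω x ≠ 0) ∧
    ∀ x ∈ U, ∀ i j k,
      ω x i * (pd j (fun y => ω y k) x - pd k (fun y => ω y j) x) +
      ω x j * (pd k (fun y => ω y i) x - pd i (fun y => ω y k) x) +
      ω x k * (pd i (fun y => ω y j) x - pd j (fun y => ω y i) x) = 0

/-- Components of the symmetric covariant differential `d^s_Γ ω`. -/
noncomputable def dsym {n : ℕ} (Γ : Fin n → Fin n → Fin n → (Fin n → ℝ) → ℝ)
    (ω : (Fin n → ℝ) → Fin n → ℝ) (i j : Fin n) (x : Fin n → ℝ) : ℝ :=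
  (pd i (fun y => ω y j) x + pd j (fun y => ω y i) x) / 2 - ∑ k, Γ k i j x * ω x k

/-- Components of the symmetric product `θ·ω` of two `1`-forms. -/
noncomputable def symProd {n : ℕ} (θ ω : (Fin n → ℝ) → Fin n → ℝ) (i j : Fin n) (x : Fin n → ℝ) : ℝ :=
  (θ x i * ω x j + θ x j * ω x i) / 2

/-- A `d`-web of hypersurfaces on `U`: a family of smooth nonvanishing integrable `1`-forms,
any `n` of which are linearly independent at every point of `U`. -/
def IsWeb {n d : ℕ} (U : Set (Fin n → ℝ)) (ωs : Fin d → (Fin n → ℝ) → Fin n → ℝ) : Prop :=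
  (∀ i, IsFoliationForm U (ωs i)) ∧
    ∀ x ∈ U, ∀ σ : Fin n → Fin d, Function.Injective σ →
      LinearIndependent ℝ (fun i => ωs (σ i) x)

/-- `Γ` and `Γ'` are projectively equivalent on `U`:
`Γ'ᵏᵢⱼ = Γᵏᵢⱼ + δᵏᵢ ρⱼ + δᵏⱼ ρᵢ` for some smooth `1`-form `ρ`. -/
def ProjEquiv {n : ℕ} (U : Set (Fin n → ℝ))
    (Γ Γ' : Fin n → Fin n → Fin n → (Fin n → ℝ) → ℝ) : Prop :=
  ∃ ρ : (Fin n → ℝ) → Fin n → ℝ, ContDiffOn ℝ (⊤ : ℕ∞) ρ U ∧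
    ∀ x ∈ U, ∀ k i j, Γ' k i j x =
      Γ k i j x + (if k = i then ρ x j else 0) + (if k = j then ρ x i else 0)

/-- `X` is the frame of vector fields dual to the coframe `ωs` on `U`. -/
def IsDualFrame {n : ℕ} (U : Set (Fin n → ℝ)) (ωs : Fin n → (Fin n → ℝ) → Fin n → ℝ)
    (X : Fin n → (Fin n → ℝ) → Fin n → ℝ) : Prop :=
  (∀ i, ContDiffOn ℝ (⊤ : ℕ∞) (X i) U) ∧
    ∀ x ∈ U, ∀ i j, (∑ k, ωs i x k * X j x k) = if i = j then 1 else 0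

/-- The web invariants `s^a_{ij} = (1/(aᵢ−aⱼ))·(aᵢ ∂ⱼ − aⱼ ∂ᵢ) log (aⱼ/aᵢ)`, where `∂ᵢ`
is derivation along the frame vector field `X i`. -/
noncomputable def sInv {n : ℕ} (X : Fin n → (Fin n → ℝ) → Fin n → ℝ)
    (a : Fin n → (Fin n → ℝ) → ℝ) (i j : Fin n) (x : Fin n → ℝ) : ℝ :=
  (1 / (a i x - a j x)) *
    (a i x * (fderiv ℝ (a j) x (X j x) / a j x - fderiv ℝ (a i) x (X j x) / a i x) -
     a j x * (fderiv ℝ (a j) x (X i x) / a j x - fderiv ℝ (a i) x (X i x) / a i x))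

/-- The curvature tensor `Rᵏₗᵢⱼ` of the connection `Γ`. -/
noncomputable def curv {n : ℕ} (Γ : Fin n → Fin n → Fin n → (Fin n → ℝ) → ℝ)
    (k l i j : Fin n) (x : Fin n → ℝ) : ℝ :=
  pd i (Γ k j l) x - pd j (Γ k i l) x +
    ∑ m, (Γ k i m x * Γ m j l x - Γ k j m x * Γ m i l x)

section Calculus

variable {E F ι : Type*} [NormedAddCommGroup E] [NormedSpace ℝ E] [NormedAddCommGroup F]
  [NormedSpace ℝ F] [Fintype ι]

lemma contDiffOn_dotProduct {r : WithTop ℕ∞} {s : Set E} {f g : E → ι → ℝ}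
    (hf : ContDiffOn ℝ r f s) (hg : ContDiffOn ℝ r g s) :
    ContDiffOn ℝ r (fun x => f x ⬝ᵥ g x) s :=
  ContDiffOn.sum fun i _ => (contDiffOn_pi.1 hf i).mul (contDiffOn_pi.1 hg i)

lemma hasDerivAt_dotProduct {f g : ℝ → ι → ℝ} {f' g' : ι → ℝ} {t : ℝ} (hf : HasDerivAt f f' t)
    (hg : HasDerivAt g g' t) :
    HasDerivAt (fun s => f s ⬝ᵥ g s) (f' ⬝ᵥ g t + f t ⬝ᵥ g') t := by
  simp only [dotProduct, ← Finset.sum_add_distrib]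
  exact HasDerivAt.fun_sum fun i _ => (hasDerivAt_pi.1 hf i).fun_mul (hasDerivAt_pi.1 hg i)

lemma deriv_pi_apply {κ : Type*} [Finite κ] {f : ℝ → κ → ℝ} {t : ℝ}
    (hf : DifferentiableAt ℝ f t) (k : κ) : deriv (fun s => f s k) t = deriv f t k :=
  have := Fintype.ofFinite κ
  (hasDerivAt_pi.1 hf.hasDerivAt k).deriv

lemma sum_mul_deriv_apply {f : ℝ → ι → ℝ} {t : ℝ} (hf : DifferentiableAt ℝ f t) (w : ι → ℝ) :
    ∑ i, w i * deriv (fun s => f s i) t = w ⬝ᵥ deriv f t := by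
  simp only [deriv_pi_apply hf, dotProduct]

lemma contDiffOn_succ_of_hasDerivAt {r : WithTop ℕ∞} (hr : r ≠ ⊤) {s : Set ℝ} (hs : IsOpen s)
    {f f' : ℝ → F} (hf : ∀ t ∈ s, HasDerivAt f (f' t) t) (hf' : ContDiffOn ℝ r f' s) :
    ContDiffOn ℝ (r + 1) f s :=
  (contDiffOn_succ_iff_deriv_of_isOpen hs).2
    ⟨fun t ht => (hf t ht).differentiableAt.differentiableWithinAt, fun h => absurd h hr,
      hf'.congr fun t ht => (hf t ht).deriv⟩

end Calculus

section ODE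

variable {E : Type*} [NormedAddCommGroup E] [NormedSpace ℝ E]

lemma eqOn_zero_of_hasDerivAt_clm {I : Set ℝ} (hI : I.OrdConnected) {A : ℝ → E →L[ℝ] E}
    (hA : ContinuousOn A I) {f : ℝ → E} (hf : ∀ t ∈ I, HasDerivAt f (A t (f t)) t) {t₀ : ℝ}
    (ht₀ : t₀ ∈ I) (hft₀ : f t₀ = 0) : Set.EqOn f 0 I := by
  intro t ht
  have hsub : Set.uIcc t₀ t ⊆ I := hI.uIcc_subset ht₀ ht
  obtain ⟨C, hC⟩ := isCompact_uIcc.exists_bound_of_continuousOn (hA.mono hsub)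
  have hlip : ∀ s ∈ Set.uIcc t₀ t, LipschitzOnWith C.toNNReal (A s) Set.univ := fun s hs =>
    ((A s).lipschitz.weaken (NNReal.coe_le_coe.1
      ((hC s hs).trans (Real.le_coe_toNNReal C)))).lipschitzOnWith
  have hcont : ContinuousOn f (Set.uIcc t₀ t) := HasDerivAt.continuousOn fun s hs => hf s (hsub hs)
  have hzero : ∀ s, HasDerivAt (0 : ℝ → E) (A s 0) s := fun s => by
    rw [map_zero]
    exact hasDerivAt_const s 0
  rcases le_total t₀ t with h | h
  · rw [Set.uIcc_of_le h] at hsub hlip hcont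
    exact ODE_solution_unique_of_mem_Icc_right (v := fun s => A s)
      (fun s hs => hlip s (Set.Ico_subset_Icc_self hs)) hcont
      (fun s hs => (hf s (hsub (Set.Ico_subset_Icc_self hs))).hasDerivWithinAt)
      (fun _ _ => Set.mem_univ _) continuousOn_const (fun s _ => (hzero s).hasDerivWithinAt)
      (fun _ _ => Set.mem_univ _) hft₀ (Set.right_mem_Icc.2 h)
  · rw [Set.uIcc_of_ge h] at hsub hlip hcont
    exact ODE_solution_unique_of_mem_Icc_left (v := fun s => A s)
      (fun s hs => hlip s (Set.Ioc_subset_Icc_self hs)) hcont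
      (fun s hs => (hf s (hsub (Set.Ioc_subset_Icc_self hs))).hasDerivWithinAt)
      (fun _ _ => Set.mem_univ _) continuousOn_const (fun s _ => (hzero s).hasDerivWithinAt)
      (fun _ _ => Set.mem_univ _) hft₀ (Set.left_mem_Icc.2 h)

variable [CompleteSpace E]

lemma exists_forall_mem_Ioo_mem_hasDerivAt {W : Set E} (hW : IsOpen W) {F : E → E}
    (hF : ContDiffOn ℝ 1 F W) {p : E} (hp : p ∈ W) (t₀ : ℝ) :
    ∃ α : ℝ → E, α t₀ = p ∧ ∃ ε > 0, ∀ t ∈ Set.Ioo (t₀ - ε) (t₀ + ε),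
      α t ∈ W ∧ HasDerivAt α (F (α t)) t := by
  obtain ⟨α, hα₀, δ, hδ, hα⟩ := (hF.contDiffAt
    (hW.mem_nhds hp)).exists_forall_mem_closedBall_exists_eq_forall_mem_Ioo_hasDerivAt₀ t₀
  simp only [← Real.ball_eq_Ioo] at hα ⊢
  have hα_cont : ContinuousAt α t₀ := (hα t₀ (Metric.mem_ball_self hδ)).continuousAt
  have hα_mem : ∀ᶠ t in nhds t₀, α t ∈ W := hα_cont.eventually_mem (hα₀ ▸ hW.mem_nhds hp)
  exact ⟨α, hα₀, Metric.eventually_nhds_iff_ball.1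
    (hα_mem.and (Filter.eventually_of_mem (Metric.ball_mem_nhds t₀ hδ) hα))⟩

lemma exists_contDiffOn_two_deriv_deriv_eq {W : Set (E × E)} (hW : IsOpen W) {G : E × E → E}
    (hG : ContDiffOn ℝ 1 G W) {x v : E} (hxv : (x, v) ∈ W) (t₀ : ℝ) :
    ∃ γ : ℝ → E, γ t₀ = x ∧ deriv γ t₀ = v ∧ ∃ ε > 0,
      ContDiffOn ℝ 2 γ (Set.Ioo (t₀ - ε) (t₀ + ε)) ∧ ∀ t ∈ Set.Ioo (t₀ - ε) (t₀ + ε),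
        (γ t, deriv γ t) ∈ W ∧ deriv (deriv γ) t = G (γ t, deriv γ t) := by
  obtain ⟨α, hα₀, ε, hε, hα⟩ :=
    exists_forall_mem_Ioo_mem_hasDerivAt hW (contDiffOn_snd.prodMk hG) hxv t₀
  set J := Set.Ioo (t₀ - ε) (t₀ + ε)
  have hpos : ∀ t ∈ J, HasDerivAt (fun s => (α s).1) (α t).2 t := fun t ht => (hα t ht).2.fst
  have hvel : ∀ t ∈ J, HasDerivAt (fun s => (α s).2) (G (α t)) t := fun t ht => (hα t ht).2.snd
  have hderiv : Set.EqOn (deriv fun s => (α s).1) (fun s => (α s).2) J :=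
    fun t ht => (hpos t ht).deriv
  have hvel_C1 : ContDiffOn ℝ 1 (fun s => (α s).2) J := by
    have hGα : ContinuousOn (G ∘ α) J := hG.continuousOn.comp
      (HasDerivAt.continuousOn fun t ht => (hα t ht).2) fun t ht => (hα t ht).1
    simpa only [zero_add] using contDiffOn_succ_of_hasDerivAt
      WithTop.zero_ne_top isOpen_Ioo hvel (contDiffOn_zero.2 hGα)
  have hpos_C2 : ContDiffOn ℝ 2 (fun s => (α s).1) J := by
    simpa only [one_add_one_eq_two] using contDiffOn_succ_of_hasDerivAt
      WithTop.one_ne_top isOpen_Ioo hpos hvel_C1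
  have ht₀ : t₀ ∈ J := by simp [J, hε]
  refine ⟨fun s => (α s).1, congrArg Prod.fst hα₀,
    (hderiv ht₀).trans (congrArg Prod.snd hα₀), ε, hε, hpos_C2, fun t ht => ?_⟩
  rw [hderiv ht, (hderiv.eventuallyEq_of_mem (isOpen_Ioo.mem_nhds ht)).deriv_eq]
  exact ⟨(hα t ht).1, (hvel t ht).deriv⟩

end ODE

section SymmetricForms

/- Polarize on `ker φ`, to which `v ↦ v - φ v • N` is a projection. -/
lemma two_mul_bilinForm_apply_eq_of_apply_self_eq_zero_of_mem_ker {R M : Type*} [CommRing R]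
    [AddCommGroup M] [Module R M] {B : LinearMap.BilinForm R M} (hB : B.IsSymm)
    {φ : M →ₗ[R] R} {N : M} (hN : φ N = 1) (hker : ∀ v, φ v = 0 → B v v = 0) (v w : M) :
    2 * B v w =
      (2 * B v N - B N N * φ v) * φ w + φ v * (2 * B w N - B N N * φ w) := by
  have hproj : ∀ u, φ (u - φ u • N) = 0 := fun u => by simp [hN]
  have hv := hker _ (hproj v)
  have hw := hker _ (hproj w)
  have hvw := hker ((v - φ v • N) + (w - φ w • N)) (by rw [map_add, hproj, hproj, add_zero])
  simp only [map_add, map_sub, map_smul, LinearMap.add_apply, LinearMap.sub_apply,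
    LinearMap.smul_apply, smul_eq_mul, hB.eq N v, hB.eq N w, hB.eq w v] at hv hw hvw
  linear_combination hvw - hv - hw

open Matrix

/-- The covector `θ` with `2 S = θ wᵀ + w θᵀ`, for a symmetric matrix `S` whose quadratic form
vanishes on the kernel of `w` and a vector `N` normalised by `w(N) = 1`. -/
def symmCofactor {ι R : Type*} [Fintype ι] [CommRing R] (S : Matrix ι ι R) (w N : ι → R) :
    ι → R :=
  2 • S *ᵥ N - (N ⬝ᵥ S *ᵥ N) • w

lemma two_smul_eq_vecMulVec_symmCofactor_add {ι R : Type*} [Fintype ι] [CommRing R]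
    {S : Matrix ι ι R} (hS : S.IsSymm) {w N : ι → R} (hN : w ⬝ᵥ N = 1)
    (hker : ∀ v, w ⬝ᵥ v = 0 → v ⬝ᵥ S *ᵥ v = 0) :
    2 • S = vecMulVec (symmCofactor S w N) w + vecMulVec w (symmCofactor S w N) := by
  classical
  ext i j
  have key := two_mul_bilinForm_apply_eq_of_apply_self_eq_zero_of_mem_ker
    (isSymm_toBilin'_iff_isSymm.2 hS) (φ := dotProductBilin R R w) (N := N) hN
    (fun v hv => by rw [toBilin'_apply']; exact hker v hv) (Pi.single i 1) (Pi.single j 1)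
  simpa [symmCofactor, vecMulVec_apply, toBilin'_apply'] using key

lemma exists_contDiffOn_two_smul_eq_vecMulVec_add {E ι : Type*} [NormedAddCommGroup E]
    [NormedSpace ℝ E] [Fintype ι] {r : WithTop ℕ∞} {U : Set E} {S : E → Matrix ι ι ℝ}
    {ω : E → ι → ℝ} (hS : ∀ i, ContDiffOn ℝ r (fun x => S x i) U)
    (hSsymm : ∀ x ∈ U, (S x).IsSymm) (hω : ContDiffOn ℝ r ω U) (hω0 : ∀ x ∈ U, ω x ≠ 0)
    (hker : ∀ x ∈ U, ∀ v, ω x ⬝ᵥ v = 0 → v ⬝ᵥ S x *ᵥ v = 0) :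
    ∃ θ : E → ι → ℝ, ContDiffOn ℝ r θ U ∧
      ∀ x ∈ U, 2 • S x = vecMulVec (θ x) (ω x) + vecMulVec (ω x) (θ x) := by
  have hnorm : ∀ x ∈ U, ω x ⬝ᵥ ω x ≠ 0 := fun x hx => dotProduct_self_eq_zero.not.2 (hω0 x hx)
  let N : E → ι → ℝ := fun x => (ω x ⬝ᵥ ω x)⁻¹ • ω x
  have hN : ContDiffOn ℝ r N U := ((contDiffOn_dotProduct hω hω).inv hnorm).smul hω
  have hSN : ContDiffOn ℝ r (fun x => S x *ᵥ N x) U :=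
    contDiffOn_pi.2 fun i => contDiffOn_dotProduct (hS i) hN
  refine ⟨fun x => symmCofactor (S x) (ω x) (N x),
    (hSN.const_smul 2).sub ((contDiffOn_dotProduct hN hSN).smul hω), fun x hx => ?_⟩
  refine two_smul_eq_vecMulVec_symmCofactor_add (hSsymm x hx) ?_ (hker x hx)
  rw [dotProduct_smul, smul_eq_mul, inv_mul_cancel₀ (hnorm x hx)]

end SymmetricForms

section Connection

open Matrix

variable {n : ℕ} {U : Set (Fin n → ℝ)} {Γ : Fin n → Fin n → Fin n → (Fin n → ℝ) → ℝ}
  {ω θ : (Fin n → ℝ) → Fin n → ℝ} {x : Fin n → ℝ}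

/-- The matrix of the symmetric bilinear form `d^s_Γ ω` at `x`. -/
noncomputable def dsymMatrix (Γ : Fin n → Fin n → Fin n → (Fin n → ℝ) → ℝ)
    (ω : (Fin n → ℝ) → Fin n → ℝ) (x : Fin n → ℝ) : Matrix (Fin n) (Fin n) ℝ :=
  Matrix.of fun i j => dsym Γ ω i j x

/-- The vector `Γ(v, v)` at `x`, so that geodesics are the solutions of `γ̈ = -Γ(γ̇, γ̇)`. -/
def christoffelQuad (Γ : Fin n → Fin n → Fin n → (Fin n → ℝ) → ℝ) (x v : Fin n → ℝ) :
    Fin n → ℝ :=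
  fun k => ∑ i, ∑ j, Γ k i j x * v i * v j

lemma IsTorsionFreeConn.dsymMatrix_isSymm (hΓ : IsTorsionFreeConn U Γ)
    (ω : (Fin n → ℝ) → Fin n → ℝ) (x : Fin n → ℝ) : (dsymMatrix Γ ω x).IsSymm := by
  ext i j
  simp only [dsymMatrix, transpose_apply, of_apply, dsym, hΓ.2 _ i j, add_comm]

lemma IsTorsionFreeConn.contDiffOn_dsym (hΓ : IsTorsionFreeConn U Γ) (hU : IsOpen U)
    (hω : ContDiffOn ℝ (⊤ : ℕ∞) ω U) (i j : Fin n) :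
    ContDiffOn ℝ (⊤ : ℕ∞) (dsym Γ ω i j) U := by
  have hpd : ∀ i j, ContDiffOn ℝ (⊤ : ℕ∞) (pd i fun y => ω y j) U := fun i j =>
    ((contDiffOn_pi.1 hω j).fderiv_of_isOpen hU (by simp)).clm_apply contDiffOn_const
  exact (((hpd i j).add (hpd j i)).div_const 2).sub
    (ContDiffOn.sum fun k _ => (hΓ.1 k i j).mul (contDiffOn_pi.1 hω k))

lemma IsTorsionFreeConn.contDiffOn_christoffelQuad (hΓ : IsTorsionFreeConn U Γ) :
    ContDiffOn ℝ (⊤ : ℕ∞) (fun p : (Fin n → ℝ) × (Fin n → ℝ) => christoffelQuad Γ p.1 p.2)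
      (U ×ˢ Set.univ) := by
  have hcoord : ∀ i, ContDiffOn ℝ (⊤ : ℕ∞) (fun p : (Fin n → ℝ) × (Fin n → ℝ) => p.2 i)
      (U ×ˢ Set.univ) := contDiffOn_pi.1 contDiffOn_snd
  refine contDiffOn_pi.2 fun k => ContDiffOn.sum fun i _ => ContDiffOn.sum fun j _ => ?_
  exact (((hΓ.1 k i j).comp contDiffOn_fst fun p hp => hp.1).mul (hcoord i)).mul (hcoord j)

lemma dsymMatrix_eq (hω : DifferentiableAt ℝ ω x) :
    dsymMatrix Γ ω x =
      (2⁻¹ : ℝ) • ((fderiv ℝ ω x).toLinearMap.toMatrix' + (fderiv ℝ ω x).toLinearMap.toMatrix'ᵀ) -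
        ∑ k, ω x k • Matrix.of fun i j => Γ k i j x := by
  ext i j
  have hsum : (∑ k, ω x k • Matrix.of fun i j => Γ k i j x) i j = ∑ k, Γ k i j x * ω x k := by
    simp only [Matrix.sum_apply, Matrix.smul_apply, of_apply, smul_eq_mul, mul_comm]
  simp only [Matrix.sub_apply, hsum, Matrix.smul_apply, Matrix.add_apply, transpose_apply,
    LinearMap.toMatrix'_apply, dsymMatrix, of_apply, dsym, pd, fderiv_apply hω, smul_eq_mul,
    ContinuousLinearMap.comp_apply, ContinuousLinearMap.proj_apply, ContinuousLinearMap.coe_coe]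
  ring

lemma dotProduct_dsymMatrix_mulVec (hω : DifferentiableAt ℝ ω x) (v : Fin n → ℝ) :
    v ⬝ᵥ dsymMatrix Γ ω x *ᵥ v = fderiv ℝ ω x v ⬝ᵥ v - ω x ⬝ᵥ christoffelQuad Γ x v := by
  have hΓv : ∀ k, v ⬝ᵥ (Matrix.of fun i j => Γ k i j x) *ᵥ v = christoffelQuad Γ x v k := by
    intro k
    simp only [christoffelQuad, dotProduct, mulVec, of_apply, Finset.mul_sum]
    exact Finset.sum_congr rfl fun i _ => Finset.sum_congr rfl fun j _ => by ring
  have hjac : v ⬝ᵥ (fderiv ℝ ω x).toLinearMap.toMatrix' *ᵥ v = fderiv ℝ ω x v ⬝ᵥ v := by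
    rw [LinearMap.toMatrix'_mulVec, dotProduct_comm]; rfl
  rw [dsymMatrix_eq hω, sub_mulVec, dotProduct_sub, smul_mulVec, dotProduct_smul, add_mulVec,
    dotProduct_add, dotProduct_transpose_mulVec, hjac, sum_mulVec, dotProduct_sum]
  simp only [smul_mulVec, dotProduct_smul, hΓv, smul_eq_mul]
  rw [← two_mul, inv_mul_cancel_left₀ two_ne_zero]
  rfl

lemma two_smul_dsymMatrix_eq_iff :
    2 • dsymMatrix Γ ω x = vecMulVec (θ x) (ω x) + vecMulVec (ω x) (θ x) ↔
      ∀ i j, dsym Γ ω i j x = symProd θ ω i j x := by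
  simp only [← Matrix.ext_iff, two_smul, dsymMatrix, symProd, Matrix.add_apply, vecMulVec_apply,
    of_apply]
  refine forall₂_congr fun i j => ?_
  rw [← mul_two, eq_div_iff two_ne_zero, mul_comm (ω x i)]

lemma dotProduct_dsymMatrix_mulVec_of_eq_symProd
    (h : ∀ i j, dsym Γ ω i j x = symProd θ ω i j x) (v : Fin n → ℝ) :
    v ⬝ᵥ dsymMatrix Γ ω x *ᵥ v = (θ x ⬝ᵥ v) * (ω x ⬝ᵥ v) := by
  have hquad : v ⬝ᵥ (2 • dsymMatrix Γ ω x) *ᵥ v =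
      v ⬝ᵥ (vecMulVec (θ x) (ω x) + vecMulVec (ω x) (θ x)) *ᵥ v := by
    rw [two_smul_dsymMatrix_eq_iff.2 h]
  simp only [two_smul, add_mulVec, dotProduct_add, vecMulVec_mulVec, dotProduct_smul,
    MulOpposite.smul_eq_mul_unop, MulOpposite.unop_op, dotProduct_comm v (θ x),
    dotProduct_comm v (ω x)] at hquad
  linear_combination hquad / 2

end Connection

section Geodesics

open Matrix

variable {n : ℕ} {U : Set (Fin n → ℝ)} {Γ : Fin n → Fin n → Fin n → (Fin n → ℝ) → ℝ}
  {ω θ : (Fin n → ℝ) → Fin n → ℝ} {I : Set ℝ} {γ : ℝ → Fin n → ℝ}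

lemma isGeodesicOn_iff_deriv_deriv_eq (hI : IsOpen I) :
    IsGeodesicOn U Γ I γ ↔ Set.MapsTo γ I U ∧ ContDiffOn ℝ 2 γ I ∧
      ∀ t ∈ I, deriv (deriv γ) t = -christoffelQuad Γ (γ t) (deriv γ t) := by
  refine and_congr_right fun _ => and_congr_right fun hγ => forall₂_congr fun t ht => ?_
  have hvel : ∀ k, Set.EqOn (deriv fun u => γ u k) (fun u => deriv γ u k) I := fun k u hu =>
    deriv_pi_apply ((hγ.contDiffAt (hI.mem_nhds hu)).differentiableAt two_ne_zero) k
  have hacc : ∀ k, deriv (fun s => deriv (fun u => γ u k) s) t = deriv (deriv γ) t k := by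
    intro k
    have hγ' : ContDiffOn ℝ 1 (deriv γ) I := hγ.deriv_of_isOpen hI one_add_one_eq_two.le
    rw [((hvel k).eventuallyEq_of_mem (hI.mem_nhds ht)).deriv_eq]
    exact deriv_pi_apply ((hγ'.contDiffAt (hI.mem_nhds ht)).differentiableAt one_ne_zero) k
  simp only [hacc, hvel _ ht, eq_neg_iff_add_eq_zero]
  exact funext_iff.symm

namespace IsGeodesicOn

lemma differentiableAt (hγ : IsGeodesicOn U Γ I γ) (hI : IsOpen I) {t : ℝ} (ht : t ∈ I) :
    DifferentiableAt ℝ γ t :=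
  (hγ.2.1.contDiffAt (hI.mem_nhds ht)).differentiableAt two_ne_zero

lemma contDiffOn_deriv (hγ : IsGeodesicOn U Γ I γ) (hI : IsOpen I) :
    ContDiffOn ℝ 1 (deriv γ) I :=
  hγ.2.1.deriv_of_isOpen hI one_add_one_eq_two.le

/- Since `γ̈ = -Γ(γ̇, γ̇)`, the derivative `dω(γ̇)·γ̇ + ω(γ̈)` is `(∇ω)(γ̇, γ̇)`, which only sees
the symmetric part of `∇ω`. -/
lemma hasDerivAt_dotProduct_deriv (hγ : IsGeodesicOn U Γ I γ) (hI : IsOpen I) {t : ℝ}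
    (ht : t ∈ I) (hω : DifferentiableAt ℝ ω (γ t)) :
    HasDerivAt (fun s => ω (γ s) ⬝ᵥ deriv γ s)
      (deriv γ t ⬝ᵥ dsymMatrix Γ ω (γ t) *ᵥ deriv γ t) t := by
  have hωγ : HasDerivAt (fun s => ω (γ s)) (fderiv ℝ ω (γ t) (deriv γ t)) t :=
    hω.hasFDerivAt.comp_hasDerivAt t (hγ.differentiableAt hI ht).hasDerivAt
  have hacc : HasDerivAt (deriv γ) (-christoffelQuad Γ (γ t) (deriv γ t)) t := by
    rw [← ((isGeodesicOn_iff_deriv_deriv_eq hI).1 hγ).2.2 t ht]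
    exact (((hγ.contDiffOn_deriv hI).contDiffAt (hI.mem_nhds ht)).differentiableAt
      one_ne_zero).hasDerivAt
  rw [dotProduct_dsymMatrix_mulVec hω, sub_eq_add_neg, ← dotProduct_neg]
  exact hasDerivAt_dotProduct hωγ hacc

end IsGeodesicOn

lemma IsTorsionFreeConn.exists_isGeodesicOn (hΓ : IsTorsionFreeConn U Γ) (hU : IsOpen U)
    {x : Fin n → ℝ} (hx : x ∈ U) (v : Fin n → ℝ) (t₀ : ℝ) :
    ∃ γ : ℝ → Fin n → ℝ, γ t₀ = x ∧ deriv γ t₀ = v ∧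
      ∃ ε > 0, IsGeodesicOn U Γ (Set.Ioo (t₀ - ε) (t₀ + ε)) γ := by
  obtain ⟨γ, hγx, hγv, ε, hε, hγ, hgeod⟩ := exists_contDiffOn_two_deriv_deriv_eq
    (hU.prod isOpen_univ) (hΓ.contDiffOn_christoffelQuad.neg.of_le (by simp))
    (Set.mk_mem_prod hx (Set.mem_univ v)) t₀
  exact ⟨γ, hγx, hγv, ε, hε, (isGeodesicOn_iff_deriv_deriv_eq isOpen_Ioo).2
    ⟨fun t ht => (hgeod t ht).1.1, hγ, fun t ht => (hgeod t ht).2⟩⟩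

lemma totallyGeodesic_iff_dotProduct_deriv_eq_zero :
    TotallyGeodesic U Γ ω ↔ ∀ I : Set ℝ, IsOpen I → I.OrdConnected → (0 : ℝ) ∈ I →
      ∀ γ : ℝ → Fin n → ℝ, IsGeodesicOn U Γ I γ →
        ω (γ 0) ⬝ᵥ deriv γ 0 = 0 → ∀ t ∈ I, ω (γ t) ⬝ᵥ deriv γ t = 0 := by
  refine forall₄_congr fun I hI _ h0 => forall₂_congr fun γ hγ => ?_
  rw [sum_mul_deriv_apply (hγ.differentiableAt hI h0)]
  refine imp_congr_right fun _ => forall₂_congr fun t ht => ?_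
  rw [sum_mul_deriv_apply (hγ.differentiableAt hI ht)]

lemma TotallyGeodesic.dotProduct_dsymMatrix_mulVec_eq_zero (h : TotallyGeodesic U Γ ω)
    (hU : IsOpen U) (hΓ : IsTorsionFreeConn U Γ) {x : Fin n → ℝ} (hx : x ∈ U)
    (hω : DifferentiableAt ℝ ω x) {v : Fin n → ℝ} (hv : ω x ⬝ᵥ v = 0) :
    v ⬝ᵥ dsymMatrix Γ ω x *ᵥ v = 0 := by
  obtain ⟨γ, rfl, rfl, ε, hε, hγ⟩ := hΓ.exists_isGeodesicOn hU hx v 0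
  have h0 : (0 : ℝ) ∈ Set.Ioo (0 - ε) (0 + ε) := by simp [hε]
  have htangent := totallyGeodesic_iff_dotProduct_deriv_eq_zero.1 h _ isOpen_Ioo
    Set.ordConnected_Ioo h0 γ hγ hv
  exact (hγ.hasDerivAt_dotProduct_deriv isOpen_Ioo h0 hω).unique
    ((hasDerivAt_const 0 0).congr_of_eventuallyEq
      (Filter.eventually_of_mem (isOpen_Ioo.mem_nhds h0) htangent))

lemma totallyGeodesic_of_dsym_eq_symProd (hω : ∀ x ∈ U, DifferentiableAt ℝ ω x)
    (hθ : ContinuousOn θ U) (h : ∀ x ∈ U, ∀ i j, dsym Γ ω i j x = symProd θ ω i j x) :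
    TotallyGeodesic U Γ ω := by
  refine totallyGeodesic_iff_dotProduct_deriv_eq_zero.2 fun I hI hconn h0 γ hγ hγ0 => ?_
  have hθγ : ContinuousOn (fun s => θ (γ s) ⬝ᵥ deriv γ s) I :=
    contDiffOn_zero.1 (contDiffOn_dotProduct
      (contDiffOn_zero.2 (hθ.comp hγ.2.1.continuousOn hγ.1))
      (contDiffOn_zero.2 (hγ.contDiffOn_deriv hI).continuousOn))
  refine eqOn_zero_of_hasDerivAt_clm hconn (A := fun s => (θ (γ s) ⬝ᵥ deriv γ s) • .id ℝ ℝ)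
    (hθγ.smul continuousOn_const) (fun s hs => ?_) h0 hγ0
  have hderiv := hγ.hasDerivAt_dotProduct_deriv hI hs (hω _ (hγ.1 s hs))
  rwa [dotProduct_dsymMatrix_mulVec_of_eq_symProd (h _ (hγ.1 s hs))] at hderiv

end Geodesics

theorem statement0_general {n : ℕ} {U : Set (Fin n → ℝ)} (hU : IsOpen U)
    {Γ : Fin n → Fin n → Fin n → (Fin n → ℝ) → ℝ} (hΓ : IsTorsionFreeConn U Γ)
    {ω : (Fin n → ℝ) → Fin n → ℝ} (hω : ContDiffOn ℝ (⊤ : ℕ∞) ω U) (hω0 : ∀ x ∈ U, ω x ≠ 0) :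
    TotallyGeodesic U Γ ω ↔
      ∃ θ : (Fin n → ℝ) → Fin n → ℝ, ContDiffOn ℝ (⊤ : ℕ∞) θ U ∧
        ∀ x ∈ U, ∀ i j, dsym Γ ω i j x = symProd θ ω i j x := by
  have hωdiff : ∀ x ∈ U, DifferentiableAt ℝ ω x := fun x hx =>
    (hω.contDiffAt (hU.mem_nhds hx)).differentiableAt (by simp)
  constructor
  · intro h
    obtain ⟨θ, hθ, hθω⟩ := exists_contDiffOn_two_smul_eq_vecMulVec_add
      (S := dsymMatrix Γ ω) (fun i => contDiffOn_pi.2 (hΓ.contDiffOn_dsym hU hω i))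
      (fun x _ => hΓ.dsymMatrix_isSymm ω x) hω hω0
      (fun x hx v hv => h.dotProduct_dsymMatrix_mulVec_eq_zero hU hΓ hx (hωdiff x hx) hv)
    exact ⟨θ, hθ, fun x hx => two_smul_dsymMatrix_eq_iff.1 (hθω x hx)⟩
  · rintro ⟨θ, hθ, hθω⟩
    exact totallyGeodesic_of_dsym_eq_symProd hωdiff hθ.continuousOn hθω

/-- the foliation of a nonvanishing integrable 1-form `ω` is totally geodesic
for a torsion-free connection `Γ` iff `d^s_Γ ω = θ·ω` for some smooth 1-form `θ`. -/
theorem statement0 {n : ℕ} (hn : 2 ≤ n) (U : Set (Fin n → ℝ)) (hU : IsOpen U)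
    (hUconn : IsConnected U)
    (Γ : Fin n → Fin n → Fin n → (Fin n → ℝ) → ℝ) (hΓ : IsTorsionFreeConn U Γ)
    (ω : (Fin n → ℝ) → Fin n → ℝ) (hω : IsFoliationForm U ω) :
    TotallyGeodesic U Γ ω ↔
      ∃ θ : (Fin n → ℝ) → Fin n → ℝ, ContDiffOn ℝ (⊤ : ℕ∞) θ U ∧
        ∀ x ∈ U, ∀ i j, dsym Γ ω i j x = symProd θ ω i j x := by
  exact statement0_general hU hΓ hω.1 hω.2.1
end

section
/- Let q be a symmetric bilinear form on ℝⁿ and let ω be a nonzero linear functional on ℝⁿ. If q(v, w) = 0 for all v, w in the kernel of ω, then there exists a unique linear functional θ on ℝⁿ such that q = ½(θ ⊗ ω + ω ⊗ θ). -/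
open scoped BigOperators

/-! Fix `e` with `ω e = 1`. Every vector splits as `v = (v - ω v • e) + ω v • e` with the first
summand in `ker ω`, so a bilinear map `q` vanishing on `ker ω × ker ω` is determined by its values
`q v e` and `q e v`; collecting terms in the symmetric case produces `θ`. Conversely, evaluating the
factorization at `(e, e)` gives `θ e = q e e`, and then at `(e, v)` it gives `θ v`. -/

section SymmetricFactor

variable {R M N : Type*} [CommRing R] [AddCommGroup M] [Module R M] [AddCommGroup N] [Module R N]

/-- The linear map `θ` with `2q = θ ⊗ ω + ω ⊗ θ`, when it exists, written in terms of a vector `e`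
normalized by `ω e = 1`. Carrying the factor `2` on the left avoids dividing in `N`. -/
def symmetricFactor (q : M →ₗ[R] M →ₗ[R] N) (ω : M →ₗ[R] R) (e : M) : M →ₗ[R] N :=
  (2 : R) • q e - ω.smulRight (q e e)

variable {q : M →ₗ[R] M →ₗ[R] N} {ω : M →ₗ[R] R} {e : M}

theorem symmetricFactor_apply (v : M) :
    symmetricFactor q ω e v = (2 : R) • q e v - ω v • q e e :=
  rfl

theorem sub_smul_mem_ker_of_apply_eq_one (he : ω e = 1) (v : M) :
    v - ω v • e ∈ LinearMap.ker ω := by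
  simp [he]

theorem apply_apply_eq_of_vanishes_on_ker (he : ω e = 1)
    (h : ∀ v ∈ LinearMap.ker ω, ∀ w ∈ LinearMap.ker ω, q v w = 0) (v w : M) :
    q v w = ω w • q v e + ω v • q e w - (ω v * ω w) • q e e := by
  have h_vanish : q (v - ω v • e) (w - ω w • e) = 0 :=
    h _ (sub_smul_mem_ker_of_apply_eq_one he v) _ (sub_smul_mem_ker_of_apply_eq_one he w)
  simp only [map_sub, map_smul, LinearMap.sub_apply, LinearMap.smul_apply] at h_vanish
  linear_combination (norm := module) h_vanish

theorem two_smul_apply_apply_eq_smul_symmetricFactor_add (hq : ∀ v w, q v w = q w v) (he : ω e = 1)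
    (h : ∀ v ∈ LinearMap.ker ω, ∀ w ∈ LinearMap.ker ω, q v w = 0) (v w : M) :
    (2 : R) • q v w = ω w • symmetricFactor q ω e v + ω v • symmetricFactor q ω e w := by
  rw [apply_apply_eq_of_vanishes_on_ker he h v w, hq v e, symmetricFactor_apply,
    symmetricFactor_apply]
  module

theorem eq_symmetricFactor (h2 : IsSMulRegular N (2 : R)) (he : ω e = 1) {θ : M →ₗ[R] N}
    (hθ : ∀ v w, (2 : R) • q v w = ω w • θ v + ω v • θ w) :
    θ = symmetricFactor q ω e := by
  have hθe : θ e = q e e := h2 <| by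
    calc (2 : R) • θ e = ω e • θ e + ω e • θ e := by rw [he, one_smul, two_smul]
      _ = (2 : R) • q e e := (hθ e e).symm
  ext v
  calc θ v = (ω v • θ e + ω e • θ v) - ω v • θ e := by rw [he, one_smul, add_sub_cancel_left]
    _ = (2 : R) • q e v - ω v • q e e := by rw [← hθ e v, hθe]
    _ = symmetricFactor q ω e v := (symmetricFactor_apply v).symm

end SymmetricFactor

theorem statement2_general {R M N : Type*} [CommRing R] [AddCommGroup M] [Module R M]
    [AddCommGroup N] [Module R N] (h2 : IsSMulRegular N (2 : R))
    (q : M →ₗ[R] M →ₗ[R] N) (hq : ∀ v w, q v w = q w v)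
    (ω : M →ₗ[R] R) (hω : Function.Surjective ω)
    (h : ∀ v ∈ LinearMap.ker ω, ∀ w ∈ LinearMap.ker ω, q v w = 0) :
    ∃! θ : M →ₗ[R] N, ∀ v w, (2 : R) • q v w = ω w • θ v + ω v • θ w := by
  obtain ⟨e, he⟩ := hω 1
  exact ⟨symmetricFactor q ω e, two_smul_apply_apply_eq_smul_symmetricFactor_add hq he h,
    fun _ hθ => eq_symmetricFactor h2 he hθ⟩

/-- a symmetric bilinear form vanishing on the kernel of a nonzero linear
functional `ω` factors uniquely as `q = ½(θ ⊗ ω + ω ⊗ θ)`. -/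
theorem statement2 {n : ℕ} (hn : 2 ≤ n)
    (q : (Fin n → ℝ) →ₗ[ℝ] (Fin n → ℝ) →ₗ[ℝ] ℝ) (hq : ∀ v w, q v w = q w v)
    (ω : (Fin n → ℝ) →ₗ[ℝ] ℝ) (hω : ω ≠ 0)
    (h : ∀ v ∈ LinearMap.ker ω, ∀ w ∈ LinearMap.ker ω, q v w = 0) :
    ∃! θ : (Fin n → ℝ) →ₗ[ℝ] ℝ, ∀ v w, q v w = (θ v * ω w + ω v * θ w) / 2 := by
  simpa only [smul_eq_mul, mul_comm, eq_div_iff (two_ne_zero' ℝ)] using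
    statement2_general (.of_ne_zero (two_ne_zero' ℝ)) q hq ω (LinearMap.surjective hω) h
end

section
/- If λ is any smooth nonvanishing function on U, then the rescaled functions (λa₁, …, λa_n) satisfy s^{λa}_{ij} = s^a_{ij} for all i ≠ j; that is, s^a_{ij} depends only on the point [a₁ : … : a_n] of projective space determined by (a₁, …, a_n). -/
/-!
The expression for `s^a_{ij}` is homogeneous of degree zero, and `a` is differentiated only through
`log (aⱼ/aᵢ)`. In terms of the ratio `q = aⱼ/aᵢ` it reads
`(1 - q) s^a_{ij} = Xⱼ(q)/q - Xᵢ(q)`, and `q` is unchanged when `a` is rescaled.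
-/

open scoped BigOperators

section

variable {𝕜 E : Type*} [NontriviallyNormedField 𝕜] [NormedAddCommGroup E] [NormedSpace 𝕜 E]
  {f g : E → 𝕜} {x : E}

theorem fderiv_div (hf : DifferentiableAt 𝕜 f x) (hg : DifferentiableAt 𝕜 g x) (hgx : g x ≠ 0) :
    fderiv 𝕜 (f / g) x = (g x ^ 2)⁻¹ • (g x • fderiv 𝕜 f x - f x • fderiv 𝕜 g x) := by
  have hinv : HasFDerivAt g⁻¹ (-(g x ^ 2)⁻¹ • fderiv 𝕜 g x) x :=
    (hasDerivAt_inv hgx).comp_hasFDerivAt x hg.hasFDerivAt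
  rw [div_eq_mul_inv, (hf.hasFDerivAt.mul hinv).fderiv]
  ext v
  simp only [add_apply, sub_apply, smul_apply, smul_eq_mul, Pi.inv_apply]
  field_simp
  ring

theorem fderiv_div_apply_div_eq_sub (hf : DifferentiableAt 𝕜 f x) (hg : DifferentiableAt 𝕜 g x)
    (hfx : f x ≠ 0) (hgx : g x ≠ 0) (v : E) :
    fderiv 𝕜 (f / g) x v / (f x / g x) = fderiv 𝕜 f x v / f x - fderiv 𝕜 g x v / g x := by
  rw [fderiv_div hf hg hgx]
  simp only [smul_apply, sub_apply, smul_eq_mul]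
  field_simp

end

section

variable {n : ℕ} {X : Fin n → (Fin n → ℝ) → Fin n → ℝ} {a : Fin n → (Fin n → ℝ) → ℝ}
  {i j : Fin n} {x : Fin n → ℝ}

theorem one_sub_div_mul_sInv (hdi : DifferentiableAt ℝ (a i) x)
    (hdj : DifferentiableAt ℝ (a j) x) (hi : a i x ≠ 0) (hj : a j x ≠ 0) (hij : a i x ≠ a j x) :
    (1 - a j x / a i x) * sInv X a i j x =
      fderiv ℝ (a j / a i) x (X j x) / (a j x / a i x) - fderiv ℝ (a j / a i) x (X i x) := by
  have hsub : a i x - a j x ≠ 0 := sub_ne_zero.mpr hij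
  simp only [sInv, ← fderiv_div_apply_div_eq_sub hdj hdi hj hi]
  field_simp

theorem sInv_eq_of_div_eventuallyEq {b : Fin n → (Fin n → ℝ) → ℝ}
    (hdai : DifferentiableAt ℝ (a i) x) (hdaj : DifferentiableAt ℝ (a j) x)
    (hai : a i x ≠ 0) (haj : a j x ≠ 0) (haij : a i x ≠ a j x)
    (hdbi : DifferentiableAt ℝ (b i) x) (hdbj : DifferentiableAt ℝ (b j) x)
    (hbi : b i x ≠ 0) (hbj : b j x ≠ 0) (hratio : b j / b i =ᶠ[nhds x] a j / a i) :
    sInv X b i j x = sInv X a i j x := by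
  have hratio_x : b j x / b i x = a j x / a i x := hratio.eq_of_nhds
  have hbij : b i x ≠ b j x := by
    rwa [ne_comm, Ne, ← div_eq_one_iff_eq hbi, hratio_x, div_eq_one_iff_eq hai, eq_comm]
  have hone_sub : 1 - a j x / a i x ≠ 0 :=
    sub_ne_zero.mpr fun h ↦ haij ((div_eq_one_iff_eq hai).mp h.symm).symm
  apply mul_left_cancel₀ hone_sub
  rw [one_sub_div_mul_sInv hdai hdaj hai haj haij, ← hratio_x,
    one_sub_div_mul_sInv hdbi hdbj hbi hbj hbij, hratio.fderiv_eq]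

theorem statement7_general {lam : (Fin n → ℝ) → ℝ}
    (hdi : DifferentiableAt ℝ (a i) x) (hdj : DifferentiableAt ℝ (a j) x)
    (hi : a i x ≠ 0) (hj : a j x ≠ 0) (hij : a i x ≠ a j x)
    (hdlam : DifferentiableAt ℝ lam x) (hlam : lam x ≠ 0) :
    sInv X (fun k y => lam y * a k y) i j x = sInv X a i j x := by
  have hratio : (lam * a j) / (lam * a i) =ᶠ[nhds x] a j / a i := by
    filter_upwards [hdlam.continuousAt.eventually_ne hlam] with y hy
    exact mul_div_mul_left (a j y) (a i y) hy
  exact sInv_eq_of_div_eventuallyEq hdi hdj hi hj hij (hdlam.mul hdi) (hdlam.mul hdj)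
    (mul_ne_zero hlam hi) (mul_ne_zero hlam hj) hratio

end

/-- the web invariants `s^a_{ij}` are invariant under rescaling
`(a₁, …, a_n) ↦ (λa₁, …, λa_n)` by a smooth nonvanishing function `λ`; i.e. they depend
only on the point `[a₁ : … : a_n]` of projective space. -/
theorem statement7 {n : ℕ} (hn : 2 ≤ n) (U : Set (Fin n → ℝ)) (hU : IsOpen U)
    (hUconn : IsConnected U)
    (ωs : Fin n → (Fin n → ℝ) → Fin n → ℝ)
    (hωs : ∀ i, ContDiffOn ℝ (⊤ : ℕ∞) (ωs i) U)
    (hindep : ∀ x ∈ U, LinearIndependent ℝ (fun i => ωs i x))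
    (X : Fin n → (Fin n → ℝ) → Fin n → ℝ) (hX : IsDualFrame U ωs X)
    (a : Fin n → (Fin n → ℝ) → ℝ) (ha : ∀ i, ContDiffOn ℝ (⊤ : ℕ∞) (a i) U)
    (hanz : ∀ i, ∀ x ∈ U, a i x ≠ 0)
    (hane : ∀ i j, i ≠ j → ∀ x ∈ U, a i x ≠ a j x)
    (lam : (Fin n → ℝ) → ℝ) (hlam : ContDiffOn ℝ (⊤ : ℕ∞) lam U)
    (hlamnz : ∀ x ∈ U, lam x ≠ 0) :
    ∀ i j, i ≠ j → ∀ x ∈ U,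
      sInv X (fun i y => lam y * a i y) i j x = sInv X a i j x := by
  intro i j hij x hx
  have hdiff {f : (Fin n → ℝ) → ℝ} (hf : ContDiffOn ℝ (⊤ : ℕ∞) f U) : DifferentiableAt ℝ f x :=
    (hf.contDiffAt (hU.mem_nhds hx)).differentiableAt (by simp)
  exact statement7_general (hdiff (ha i)) (hdiff (ha j)) (hanz i x hx) (hanz j x hx)
    (hane i j hij x hx) (hdiff hlam) (hlamnz x hx)
end
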